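/- Fix β > 0, d ≥ 1, s ≥ 0 and u ≥ ℓ ≥ 0, and suppose f ∈ A(s, ℓ, u). Then for all R > 0 and all p ≥ 2·p_M(s, ℓ) there exists a constant L = L(p, R) > 0 such that for all probability measures μ, ν ∈ P_{p,R}(ℝ^d), ‖√C_β(μ) − √C_β(ν)‖_F ≤ L · W_p(μ, ν). -/

import Mathlib

open MeasureTheory ENNReal
open scoped NNReal

noncomputable section

/-- Euclidean space `ℝ^d`. -/
abbrev Rd (d : ℕ) := EuclideanSpace ℝ (Fin d)

/-- The weight function `x ↦ exp (-β f x)`. -/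
def wFn (β : ℝ) {d : ℕ} (f : Rd d → ℝ) (x : Rd d) : ℝ := Real.exp (-β * f x)

/-- The weighted mean `M_β(μ) = (∫ x e^{-β f x} dμ) / (∫ e^{-β f x} dμ)`. -/
def wMean (β : ℝ) {d : ℕ} (f : Rd d → ℝ) (μ : Measure (Rd d)) : Rd d :=
  (∫ x, wFn β f x ∂μ)⁻¹ • ∫ x, wFn β f x • x ∂μ

/-- The weighted covariance `C_β(μ)`, a `d × d` matrix. -/
def wCov (β : ℝ) {d : ℕ} (f : Rd d → ℝ) (μ : Measure (Rd d)) :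
    Matrix (Fin d) (Fin d) ℝ := fun i j =>
  (∫ x, wFn β f x ∂μ)⁻¹ *
    ∫ x, wFn β f x * ((x i - wMean β f μ i) * (x j - wMean β f μ j)) ∂μ

/-- Frobenius norm of a matrix. -/
def frobNorm {m n : ℕ} (A : Matrix (Fin m) (Fin n) ℝ) : ℝ :=
  Real.sqrt (∑ i, ∑ j, (A i j) ^ 2)

/-- `S` is the (unique) positive semidefinite square root of `A`. -/
def IsPSDSqrt {d : ℕ} (S A : Matrix (Fin d) (Fin d) ℝ) : Prop :=
  S.PosSemidef ∧ S * S = A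

/-- `μ ∈ P_{p,R}`: the `p`-th moment of `μ` is bounded, `(∫ |x|^p dμ)^{1/p} ≤ R`. -/
def MomLE (p R : ℝ) {d : ℕ} (μ : Measure (Rd d)) : Prop :=
  ∫⁻ x, (‖x‖₊ : ℝ≥0∞) ^ p ∂μ ≤ ENNReal.ofReal (R ^ p)

/-- `μ ∈ P_p`: the `p`-th moment of `μ` is finite. -/
def MomFin (p : ℝ) {d : ℕ} (μ : Measure (Rd d)) : Prop :=
  ∫⁻ x, (‖x‖₊ : ℝ≥0∞) ^ p ∂μ < ⊤

/-- The Wasserstein-`p` distance between two probability measures on `ℝ^d`: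
the infimum over couplings `π` of `μ` and `ν` of `(∬ |x - y|^p dπ)^{1/p}`. -/
def Wp (p : ℝ) {d : ℕ} (μ ν : Measure (Rd d)) : ℝ :=
  (sInf {c : ℝ≥0∞ | ∃ π : Measure (Rd d × Rd d),
      π.map Prod.fst = μ ∧ π.map Prod.snd = ν ∧
      c = (∫⁻ z, (‖z.1 - z.2‖₊ : ℝ≥0∞) ^ p ∂π) ^ (1 / p)}).toReal

/-- `f_* = inf f`. -/
def fStar {d : ℕ} (f : Rd d → ℝ) : ℝ := sInf (Set.range f)

/-- The class `A(s, ℓ, u)` of objective functions: `f` is bounded from below,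
locally Lipschitz with growth exponent `s`, and `f - inf f` grows at least like
`|x|^ℓ` and at most like `|x|^u`. -/
structure ClassA {d : ℕ} (s ℓ u : ℝ) (f : Rd d → ℝ) : Prop where
  bddBelow : BddBelow (Set.range f)
  lip : ∃ Lf > 0, ∀ x y : Rd d, |f x - f y| ≤ Lf * (1 + ‖x‖ + ‖y‖) ^ s * ‖x - y‖
  growth_lower : ∃ cl > 0, ∃ Cl > 0, ∀ x : Rd d, cl * ‖x‖ ^ ℓ - Cl ≤ f x - fStar f
  growth_upper : ∃ cu > 0, ∃ Cu > 0, ∀ x : Rd d, f x - fStar f ≤ cu * ‖x‖ ^ u + Cu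

/-- `p_M(s, ℓ) = s + 2` if `ℓ = 0`, and `1` if `ℓ > 0`. -/
def pM (s ℓ : ℝ) : ℝ := if ℓ = 0 then s + 2 else 1

/-- `p_C(s, ℓ) = s + 3` if `ℓ = 0`, and `1` if `ℓ > 0`. -/
def pC (s ℓ : ℝ) : ℝ := if ℓ = 0 then s + 3 else 1

theorem spec {d : ℕ} {S : Matrix (Fin d) (Fin d) ℝ} (hS : S.PosSemidef) :
    ∃ (U : Matrix (Fin d) (Fin d) ℝ) (a : Fin d → ℝ), U * U.transpose = 1 ∧ U.transpose * U = 1 ∧ (∀ i, 0 ≤ a i) ∧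
      S = U * Matrix.diagonal a * U.transpose := by
  have h := hS.isHermitian.spectral_theorem
  refine ⟨hS.isHermitian.eigenvectorUnitary, hS.isHermitian.eigenvalues, ?_, ?_, hS.eigenvalues_nonneg, ?_⟩
  · have := Unitary.coe_mul_star_self hS.isHermitian.eigenvectorUnitary
    simpa [Matrix.star_eq_conjTranspose] using this
  · have := Unitary.coe_star_mul_self hS.isHermitian.eigenvectorUnitary
    simpa [Matrix.star_eq_conjTranspose] using this
  · conv_lhs => rw [h]
    rw [Unitary.conjStarAlgAut_apply]
    rfl

theorem bessel' {E : Type*} [NormedAddCommGroup E] [InnerProductSpace ℝ E] {d : ℕ}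
    (u : Fin d → E) (h0 : ∀ i j, i ≠ j → inner ℝ (u i) (u j) = 0) (h1 : ∀ i, ‖u i‖ ≤ 1) (v : E) :
    ∑ i, (inner ℝ (u i) v) ^ 2 ≤ ‖v‖ ^ 2 := by
  have key : ‖v - ∑ i, inner ℝ (u i) v • u i‖ ^ 2 =
      ‖v‖ ^ 2 - 2 * ∑ i, (inner ℝ (u i) v) ^ 2 + ∑ i, (inner ℝ (u i) v) ^ 2 * ‖u i‖ ^ 2 := by
    rw [norm_sub_sq_real, inner_sum]
    congr 2
    · congr 1
      refine Finset.sum_congr rfl fun i _ => ?_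
      rw [inner_smul_right, real_inner_comm]; ring
    · rw [← real_inner_self_eq_norm_sq, sum_inner]
      refine Finset.sum_congr rfl fun i _ => ?_
      rw [inner_sum, Finset.sum_eq_single i]
      · rw [inner_smul_left, inner_smul_right, real_inner_self_eq_norm_sq]; simp; ring
      · intro j _ hj
        rw [inner_smul_left, inner_smul_right, h0 i j (Ne.symm hj)]; simp
      · simp
  have h2 : ∑ i, (inner ℝ (u i) v) ^ 2 * ‖u i‖ ^ 2 ≤ ∑ i, (inner ℝ (u i) v) ^ 2 := by
    refine Finset.sum_le_sum fun i _ => ?_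
    have := h1 i
    have h3 : ‖u i‖ ^ 2 ≤ 1 := pow_le_one₀ (norm_nonneg _) this
    nlinarith [sq_nonneg (inner ℝ (u i) v)]
  have := sq_nonneg ‖v - ∑ i, inner ℝ (u i) v • u i‖
  linarith

/-- normalised image of an orthonormal eigenbasis -/
theorem polar {E : Type*} [NormedAddCommGroup E] [InnerProductSpace ℝ E] {d : ℕ}
    (F : Fin d → E) (S U : Matrix (Fin d) (Fin d) ℝ) (a : Fin d → ℝ)
    (hS : ∀ k l, (S * S) k l = inner ℝ (F k) (F l))
    (hU : U * U.transpose = 1) (hU' : U.transpose * U = 1)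
    (hSU : S = U * Matrix.diagonal a * U.transpose) :
    ∃ u : Fin d → E, (∀ i j, i ≠ j → inner ℝ (u i) (u j) = 0) ∧ (∀ i, ‖u i‖ ≤ 1) ∧
      ∀ k, F k = ∑ i, (U k i * a i) • u i := by
  set P : Fin d → E := fun i => ∑ k, U k i • F k with hP
  have hPP : ∀ i j, inner ℝ (P i) (P j) = (Matrix.diagonal (fun i => a i * a i)) i j := by
    intro i j
    have : U.transpose * (S * S) * U = Matrix.diagonal (fun i => a i * a i) := by
      rw [hSU]
      calc _ = (U.transpose * U) * Matrix.diagonal a * (U.transpose * U) * Matrix.diagonal a * (U.transpose * U) := by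
            simp only [Matrix.mul_assoc]
        _ = _ := by rw [hU']; simp
    rw [← this, Matrix.mul_apply]
    simp only [Matrix.mul_apply (M := U.transpose), hP, sum_inner, inner_sum, inner_smul_left, inner_smul_right, hS]
    simp only [Matrix.transpose_apply, Finset.sum_mul, Finset.mul_sum]
    refine Finset.sum_congr rfl fun k _ => Finset.sum_congr rfl fun l _ => ?_
    simp; ring
  have hPn : ∀ i, ‖P i‖ = |a i| := by
    intro i
    have := hPP i i
    rw [real_inner_self_eq_norm_sq, Matrix.diagonal_apply_eq, ← sq] at this
    rw [← abs_of_nonneg (norm_nonneg (P i))]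
    exact (sq_eq_sq_iff_abs_eq_abs _ _).1 this
  have hPa : ∀ i, P i = a i • ((a i)⁻¹ • P i) := by
    intro i
    by_cases h : a i = 0
    · have := hPn i
      rw [h] at this; simp at this; simp [this]
    · rw [smul_inv_smul₀ h]
  refine ⟨fun i => (a i)⁻¹ • P i, ?_, ?_, ?_⟩
  · intro i j hij
    rw [inner_smul_left, inner_smul_right, hPP, Matrix.diagonal_apply_ne _ hij]; simp
  · intro i
    rw [norm_smul, hPn, Real.norm_eq_abs, abs_inv]
    exact inv_mul_le_one
  · intro k
    have : F k = ∑ i, U k i • P i := by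
      simp only [hP, Finset.smul_sum, smul_smul]
      rw [Finset.sum_comm]
      simp only [← Finset.sum_smul]
      have h : ∀ l, ∑ i, U k i * U l i = (1 : Matrix (Fin d) (Fin d) ℝ) k l := by
        intro l; rw [← hU, Matrix.mul_apply]; rfl
      simp [h, Matrix.one_apply]
    rw [this]
    refine Finset.sum_congr rfl fun i _ => ?_
    rw [mul_smul, ← hPa]

theorem gram_sqrt {E : Type*} [NormedAddCommGroup E] [InnerProductSpace ℝ E] {d : ℕ}
    (F G : Fin d → E) (S T : Matrix (Fin d) (Fin d) ℝ) (hSp : S.PosSemidef) (hTp : T.PosSemidef)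
    (hS : ∀ k l, (S * S) k l = inner ℝ (F k) (F l))
    (hT : ∀ k l, (T * T) k l = inner ℝ (G k) (G l)) :
    ∑ i, ∑ j, ((S - T) i j) ^ 2 ≤ 2 * ∑ i, ‖F i - G i‖ ^ 2 := by
  obtain ⟨U, a, hU, hU', ha, hSU⟩ := spec hSp
  obtain ⟨V, b, hV, hV', hb, hTV⟩ := spec hTp
  obtain ⟨u, hu0, hu1, huF⟩ := polar F S U a hS hU hU' hSU
  obtain ⟨v, hv0, hv1, hvG⟩ := polar G T V b hT hV hV' hTV
  set C : Matrix (Fin d) (Fin d) ℝ := U.transpose * V with hC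
  have hSs : S.transpose = S := by simpa using hSp.isHermitian.eq
  have hTs : T.transpose = T := by simpa using hTp.isHermitian.eq
  have e1 : ∑ i, ∑ j, ((S - T) i j) ^ 2 = (S * S).trace + (T * T).trace - 2 * (S * T).trace := by
    have h1 : ∑ i, ∑ j, ((S - T) i j) ^ 2 = ((S - T) * (S - T).transpose).trace := by
      simp [Matrix.trace, Matrix.mul_apply, sq]
    rw [h1, Matrix.transpose_sub, hSs, hTs, sub_mul, mul_sub, mul_sub, Matrix.trace_sub, Matrix.trace_sub,
      Matrix.trace_sub, Matrix.trace_mul_comm T S]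
    ring
  have e2 : ∑ i, ‖F i‖ ^ 2 = (S * S).trace := by
    simp [Matrix.trace, hS]
  have e3 : ∑ i, ‖G i‖ ^ 2 = (T * T).trace := by
    simp [Matrix.trace, hT]
  have e4 : (S * S).trace = ∑ i, a i ^ 2 := by
    have : S * S = U * Matrix.diagonal (fun i => a i * a i) * U.transpose := by
      rw [hSU]
      calc _ = U * Matrix.diagonal a * (U.transpose * U) * Matrix.diagonal a * U.transpose := by
            simp only [Matrix.mul_assoc]
        _ = _ := by rw [hU']; simp [Matrix.mul_assoc]
    rw [this, Matrix.trace_mul_comm, ← Matrix.mul_assoc, hU', one_mul, Matrix.trace_diagonal]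
    simp [sq]
  have e5 : (T * T).trace = ∑ i, b i ^ 2 := by
    have : T * T = V * Matrix.diagonal (fun i => b i * b i) * V.transpose := by
      rw [hTV]
      calc _ = V * Matrix.diagonal b * (V.transpose * V) * Matrix.diagonal b * V.transpose := by
            simp only [Matrix.mul_assoc]
        _ = _ := by rw [hV']; simp [Matrix.mul_assoc]
    rw [this, Matrix.trace_mul_comm, ← Matrix.mul_assoc, hV', one_mul, Matrix.trace_diagonal]
    simp [sq]
  have e6 : (S * T).trace = ∑ i, ∑ j, a i * b j * C i j ^ 2 := by
    have : (S * T).trace = (Matrix.diagonal a * C * (Matrix.diagonal b * C.transpose)).trace := by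
      rw [hSU, hTV, hC, Matrix.mul_assoc U, Matrix.mul_assoc U, Matrix.trace_mul_comm]
      simp only [Matrix.transpose_mul, Matrix.transpose_transpose, Matrix.mul_assoc]
    rw [this]
    simp only [Matrix.trace, Matrix.diag_apply, Matrix.mul_apply (M := Matrix.diagonal a * C), Matrix.diagonal_mul, Matrix.transpose_apply]
    refine Finset.sum_congr rfl fun i _ => Finset.sum_congr rfl fun j _ => ?_
    ring
  have e7 : ∑ k, inner ℝ (F k) (G k) = ∑ i, ∑ j, a i * b j * (C i j * inner ℝ (u i) (v j)) := by
    have : ∀ i j, C i j = ∑ k, U k i * V k j := by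
      intro i j; rw [hC, Matrix.mul_apply]; rfl
    simp only [this, huF, hvG, sum_inner, inner_sum, inner_smul_left, inner_smul_right, Finset.sum_mul, Finset.mul_sum]
    rw [Finset.sum_comm]
    conv_rhs => rw [Finset.sum_comm]
    refine Finset.sum_congr rfl fun i _ => ?_
    rw [Finset.sum_comm]
    refine Finset.sum_congr rfl fun j _ => Finset.sum_congr rfl fun k _ => ?_
    simp; ring
  have e8 : ∑ i, ‖F i - G i‖ ^ 2 = ∑ i, ‖F i‖ ^ 2 + ∑ i, ‖G i‖ ^ 2 - 2 * ∑ k, inner ℝ (F k) (G k) := by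
    simp only [norm_sub_sq_real, Finset.sum_add_distrib, Finset.sum_sub_distrib, Finset.mul_sum]
    ring
  have b1 : ∑ i, ∑ j, a i ^ 2 * (inner ℝ (u i) (v j)) ^ 2 ≤ ∑ i, a i ^ 2 := by
    refine Finset.sum_le_sum fun i _ => ?_
    rw [← Finset.mul_sum]
    have := bessel' v hv0 hv1 (u i)
    simp only [real_inner_comm] at this
    have h2 : ‖u i‖ ^ 2 ≤ 1 := pow_le_one₀ (norm_nonneg _) (hu1 i)
    have h3 : ∑ j, (inner ℝ (u i) (v j)) ^ 2 ≤ 1 := by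
      refine le_trans (le_of_eq ?_) ((bessel' v hv0 hv1 (u i)).trans h2)
      exact Finset.sum_congr rfl fun j _ => by rw [real_inner_comm]
    nlinarith [sq_nonneg (a i)]
  have b2 : ∑ i, ∑ j, b j ^ 2 * (inner ℝ (u i) (v j)) ^ 2 ≤ ∑ i, b i ^ 2 := by
    rw [Finset.sum_comm]
    refine Finset.sum_le_sum fun j _ => ?_
    rw [← Finset.mul_sum]
    have h2 : ‖v j‖ ^ 2 ≤ 1 := pow_le_one₀ (norm_nonneg _) (hv1 j)
    have h3 := (bessel' u hu0 hu1 (v j)).trans h2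
    nlinarith [sq_nonneg (b j)]
  have b3 : 0 ≤ ∑ i, ∑ j, (a i ^ 2 * (inner ℝ (u i) (v j)) ^ 2 + b j ^ 2 * (inner ℝ (u i) (v j)) ^ 2
      + 2 * (a i * b j * C i j ^ 2) - 4 * (a i * b j * (C i j * inner ℝ (u i) (v j)))) := by
    refine Finset.sum_nonneg fun i _ => Finset.sum_nonneg fun j _ => ?_
    have h := mul_nonneg (mul_nonneg (ha i) (hb j)) (sq_nonneg (C i j - inner ℝ (u i) (v j)))
    have h2 := sq_nonneg ((a i - b j) * inner ℝ (u i) (v j))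
    nlinarith
  simp only [Finset.sum_add_distrib, Finset.sum_sub_distrib, ← Finset.mul_sum] at b3
  simp only [← Finset.mul_sum] at b1 b2
  rw [e1, e8, e2, e3, e4, e5, e6, e7]
  linarith

theorem hilb {E : Type*} [NormedAddCommGroup E] [InnerProductSpace ℝ E] (c B : ℝ) (hc : 0 < c) (hB : 0 < B) :
    ∀ H₁ H₂ G₁ G₂ : E, c ≤ ‖H₁‖ → c ≤ ‖H₂‖ → ‖G₁‖ ≤ B → ‖G₂‖ ≤ B →
      ‖‖H₁‖⁻¹ • (G₁ - (inner ℝ H₁ G₁ * (‖H₁‖⁻¹) ^ 2) • H₁) - ‖H₂‖⁻¹ • (G₂ - (inner ℝ H₂ G₂ * (‖H₂‖⁻¹) ^ 2) • H₂)‖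
        ≤ (2 / c + (4 * B / c + 2 * B / c) / c) * (‖H₁ - H₂‖ + ‖G₁ - G₂‖) := by
  intro H₁ H₂ G₁ G₂ h1 h2 g1 g2
  set n₁ := ‖H₁‖⁻¹ with hn₁
  set n₂ := ‖H₂‖⁻¹ with hn₂
  have p1 : 0 < ‖H₁‖ := hc.trans_le h1
  have p2 : 0 < ‖H₂‖ := hc.trans_le h2
  have q1 : n₁ ≤ c⁻¹ := inv_anti₀ hc h1
  have q2 : n₂ ≤ c⁻¹ := inv_anti₀ hc h2
  have r1 : 0 < n₁ := inv_pos.2 p1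
  have r2 : 0 < n₂ := inv_pos.2 p2
  set δ := ‖H₁ - H₂‖ with hδ
  have hdn : |n₁ - n₂| * ‖H₂‖ ≤ c⁻¹ * δ := by
    have : (n₁ - n₂) * ‖H₂‖ = n₁ * (‖H₂‖ - ‖H₁‖) := by
      rw [hn₁, hn₂]; field_simp
    rw [show |n₁ - n₂| * ‖H₂‖ = |(n₁ - n₂) * ‖H₂‖| by rw [abs_mul, abs_of_pos p2], this, abs_mul, abs_of_pos r1]
    have := abs_norm_sub_norm_le H₂ H₁
    rw [norm_sub_rev] at this
    gcongr
  have hdn' : |n₁ - n₂| ≤ c⁻¹ * (c⁻¹ * δ) := by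
    have : |n₁ - n₂| = n₂ * (|n₁ - n₂| * ‖H₂‖) := by
      rw [hn₂]; field_simp
    rw [this]; gcongr
  set e₁ := n₁ • H₁ with he₁
  set e₂ := n₂ • H₂ with he₂
  have ne1 : ‖e₁‖ = 1 := by rw [he₁, norm_smul, Real.norm_of_nonneg r1.le, hn₁]; field_simp
  have ne2 : ‖e₂‖ = 1 := by rw [he₂, norm_smul, Real.norm_of_nonneg r2.le, hn₂]; field_simp
  have hde : ‖e₁ - e₂‖ ≤ 2 * c⁻¹ * δ := by
    have : e₁ - e₂ = n₁ • (H₁ - H₂) + (n₁ - n₂) • H₂ := by rw [he₁, he₂]; module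
    rw [this]
    refine (norm_add_le _ _).trans ?_
    rw [norm_smul, norm_smul, Real.norm_of_nonneg r1.le, Real.norm_eq_abs]
    have : n₁ * ‖H₁ - H₂‖ ≤ c⁻¹ * δ := by gcongr
    linarith
  have f1 : G₁ - (inner ℝ H₁ G₁ * n₁ ^ 2) • H₁ = G₁ - inner ℝ e₁ G₁ • e₁ := by
    rw [he₁, inner_smul_left, smul_smul]; congr 2; simp; ring
  have f2 : G₂ - (inner ℝ H₂ G₂ * n₂ ^ 2) • H₂ = G₂ - inner ℝ e₂ G₂ • e₂ := by
    rw [he₂, inner_smul_left, smul_smul]; congr 2; simp; ring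
  rw [f1, f2]
  have i1 : |inner ℝ e₁ G₁| ≤ B := by
    refine (abs_real_inner_le_norm _ _).trans ?_; rw [ne1, one_mul]; exact g1
  have i2 : |inner ℝ e₂ G₂| ≤ B := by
    refine (abs_real_inner_le_norm _ _).trans ?_; rw [ne2, one_mul]; exact g2
  set A₁ := G₁ - inner ℝ e₁ G₁ • e₁ with hA₁
  set A₂ := G₂ - inner ℝ e₂ G₂ • e₂ with hA₂
  have nA2 : ‖A₂‖ ≤ 2 * B := by
    refine (norm_sub_le _ _).trans ?_
    rw [norm_smul, ne2, Real.norm_eq_abs]; linarith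
  have hin : |inner ℝ e₁ G₁ - inner ℝ e₂ G₂| ≤ ‖e₁ - e₂‖ * B + ‖G₁ - G₂‖ := by
    have : inner ℝ e₁ G₁ - inner ℝ e₂ G₂ = inner ℝ (e₁ - e₂) G₁ + inner ℝ e₂ (G₁ - G₂) := by
      rw [inner_sub_left, inner_sub_right]; ring
    rw [this]
    refine (abs_add_le _ _).trans ?_
    have t1 := abs_real_inner_le_norm (e₁ - e₂) G₁
    have t2 := abs_real_inner_le_norm e₂ (G₁ - G₂)
    rw [ne2, one_mul] at t2
    have : ‖e₁ - e₂‖ * ‖G₁‖ ≤ ‖e₁ - e₂‖ * B := by gcongr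
    linarith
  have hdA : ‖A₁ - A₂‖ ≤ 2 * ‖G₁ - G₂‖ + 2 * B * (2 * c⁻¹ * δ) := by
    have : A₁ - A₂ = (G₁ - G₂) - (inner ℝ e₁ G₁ • (e₁ - e₂) + (inner ℝ e₁ G₁ - inner ℝ e₂ G₂) • e₂) := by
      rw [hA₁, hA₂]; module
    rw [this]
    refine (norm_sub_le _ _).trans ?_
    have t := norm_add_le (inner ℝ e₁ G₁ • (e₁ - e₂)) ((inner ℝ e₁ G₁ - inner ℝ e₂ G₂) • e₂)
    rw [norm_smul, norm_smul, ne2, Real.norm_eq_abs, Real.norm_eq_abs] at t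
    have t1 : |inner ℝ e₁ G₁| * ‖e₁ - e₂‖ ≤ B * ‖e₁ - e₂‖ := by gcongr
    have t2 : B * ‖e₁ - e₂‖ ≤ B * (2 * c⁻¹ * δ) := by gcongr
    linarith
  have : n₁ • A₁ - n₂ • A₂ = n₁ • (A₁ - A₂) + (n₁ - n₂) • A₂ := by module
  rw [this]
  refine (norm_add_le _ _).trans ?_
  rw [norm_smul, norm_smul, Real.norm_of_nonneg r1.le, Real.norm_eq_abs]
  have s1 : n₁ * ‖A₁ - A₂‖ ≤ c⁻¹ * (2 * ‖G₁ - G₂‖ + 2 * B * (2 * c⁻¹ * δ)) := by gcongr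
  have s2 : |n₁ - n₂| * ‖A₂‖ ≤ c⁻¹ * (c⁻¹ * δ) * (2 * B) := by gcongr
  have hG := norm_nonneg (G₁ - G₂)
  have hδ0 : 0 ≤ δ := norm_nonneg _
  have : c⁻¹ * (2 * ‖G₁ - G₂‖ + 2 * B * (2 * c⁻¹ * δ)) + c⁻¹ * (c⁻¹ * δ) * (2 * B)
     = (2 / c) * ‖G₁ - G₂‖ + ((4 * B / c + 2 * B / c) / c) * δ := by
    field_simp
    try ring
  have z1 : 0 ≤ 2 / c * δ := by positivity
  have z2 : 0 ≤ ((4 * B / c + 2 * B / c) / c) * ‖G₁ - G₂‖ := by positivity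
  linarith

theorem exp_diff (a b M : ℝ) (ha : Real.exp a ≤ M) (hb : Real.exp b ≤ M) :
    |Real.exp a - Real.exp b| ≤ M * |a - b| := by
  have key : ∀ a b : ℝ, a ≤ b → Real.exp b ≤ M → |Real.exp a - Real.exp b| ≤ M * |a - b| := by
    intro a b hab hb
    have h1 : Real.exp a ≤ Real.exp b := Real.exp_le_exp.2 hab
    rw [abs_of_nonpos (by linarith), abs_of_nonpos (by linarith)]
    have h2 := Real.add_one_le_exp (a - b)
    have h3 : Real.exp a = Real.exp b * Real.exp (a - b) := by rw [← Real.exp_add]; congr 1; ring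
    have h4 : 0 < Real.exp b := Real.exp_pos b
    have h5 : Real.exp b * (b - a) ≤ M * (b - a) := by
      apply mul_le_mul_of_nonneg_right hb; linarith
    nlinarith
  rcases le_total a b with h | h
  · exact key a b h hb
  · rw [abs_sub_comm, abs_sub_comm a b]; exact key b a h ha

theorem decay_bdd (s ℓ c : ℝ) (hs : 0 ≤ s) (hℓ : 0 < ℓ) (hc : 0 < c) :
    ∃ K > 0, ∀ t : ℝ, 0 ≤ t → (1 + t) * (2 + 3 * t) ^ s * Real.exp (-(c * t ^ ℓ)) ≤ K := by
  set m := (s + 1) / ℓ with hm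
  have hm0 : 0 < m := by positivity
  have hq : 0 < (m / c) ^ m := by positivity
  refine ⟨2 * 5 ^ s * (1 + (m / c) ^ m), by positivity, ?_⟩
  intro t ht
  have he1 : Real.exp (-(c * t ^ ℓ)) ≤ 1 := by
    rw [Real.exp_le_one_iff]; have : 0 ≤ c * t ^ ℓ := by positivity
    linarith
  have he0 := Real.exp_pos (-(c * t ^ ℓ))
  rcases le_total t 1 with h | h
  · have h1 : (2 + 3 * t) ^ s ≤ 5 ^ s := Real.rpow_le_rpow (by positivity) (by linarith) hs
    calc (1 + t) * (2 + 3 * t) ^ s * Real.exp (-(c * t ^ ℓ)) ≤ 2 * 5 ^ s * 1 := by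
          gcongr; linarith
      _ ≤ _ := by gcongr; linarith
  · have t0 : 0 < t := by linarith
    have h1 : (2 + 3 * t) ^ s ≤ (5 * t) ^ s := Real.rpow_le_rpow (by positivity) (by linarith) hs
    rw [Real.mul_rpow (by norm_num) ht] at h1
    have h2 : t ^ (s + 1) * Real.exp (-(c * t ^ ℓ)) ≤ (m / c) ^ m := by
      have h3 : c * t ^ ℓ / m ≤ Real.exp (c * t ^ ℓ / m) := by
        have := Real.add_one_le_exp (c * t ^ ℓ / m); linarith
      have h4 := Real.rpow_le_rpow (by positivity) h3 hm0.le
      rw [← Real.exp_mul, div_mul_cancel₀ _ hm0.ne', mul_div_right_comm,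
        Real.mul_rpow (by positivity) (by positivity), ← Real.rpow_mul ht,
        show ℓ * m = s + 1 by rw [hm]; field_simp] at h4
      have h5 : (m / c) ^ m * (c / m) ^ m = 1 := by
        rw [← Real.mul_rpow (by positivity) (by positivity)]
        have : m / c * (c / m) = 1 := by field_simp
        rw [this, Real.one_rpow]
      rw [Real.exp_neg, ← div_eq_mul_inv, div_le_iff₀ (Real.exp_pos _)]
      calc t ^ (s + 1) = (m / c) ^ m * ((c / m) ^ m * t ^ (s + 1)) := by rw [← mul_assoc, h5, one_mul]
        _ ≤ _ := by gcongr
    calc (1 + t) * (2 + 3 * t) ^ s * Real.exp (-(c * t ^ ℓ))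
        ≤ (2 * t) * (5 ^ s * t ^ s) * Real.exp (-(c * t ^ ℓ)) := by gcongr; linarith
      _ = 2 * 5 ^ s * (t ^ (s + 1) * Real.exp (-(c * t ^ ℓ))) := by
          rw [Real.rpow_add t0, Real.rpow_one]; ring
      _ ≤ _ := by gcongr; linarith

/-- Square root of the weight. -/
def hFn (β : ℝ) {d : ℕ} (f : Rd d → ℝ) (x : Rd d) : ℝ := Real.exp (-(β / 2) * f x)

theorem wFn_eq (β : ℝ) {d : ℕ} (f : Rd d → ℝ) (x : Rd d) : wFn β f x = hFn β f x * hFn β f x := by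
  rw [wFn, hFn, ← Real.exp_add]; congr 1; ring

theorem hFn_pos (β : ℝ) {d : ℕ} (f : Rd d → ℝ) (x : Rd d) : 0 < hFn β f x := Real.exp_pos _

theorem fStar_le {d : ℕ} {s ℓ u : ℝ} {f : Rd d → ℝ} (hf : ClassA s ℓ u f) (x : Rd d) : fStar f ≤ f x :=
  csInf_le hf.bddBelow ⟨x, rfl⟩

theorem hFn_le {β : ℝ} (hβ : 0 < β) {d : ℕ} {s ℓ u : ℝ} {f : Rd d → ℝ} (hf : ClassA s ℓ u f) (x : Rd d) :
    hFn β f x ≤ Real.exp (-(β / 2) * fStar f) := by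
  refine Real.exp_le_exp.2 ?_
  have := fStar_le hf x
  nlinarith

theorem hFn_diff {β : ℝ} (hβ : 0 < β) {d : ℕ} {f : Rd d → ℝ} (x y : Rd d) (M : ℝ)
    (hx : hFn β f x ≤ M) (hy : hFn β f y ≤ M) : |hFn β f x - hFn β f y| ≤ M * (β / 2) * |f x - f y| := by
  refine (exp_diff _ _ M hx hy).trans (le_of_eq ?_)
  rw [← mul_sub, abs_mul, abs_neg, abs_of_pos (by positivity : (0 : ℝ) < β / 2), mul_assoc]

theorem ptwise (β : ℝ) (hβ : 0 < β) (d : ℕ)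
    (s ℓ u : ℝ) (hs : 0 ≤ s) (hℓ : 0 ≤ ℓ)
    (f : Rd d → ℝ) (hf : ClassA s ℓ u f) (p : ℝ) (hp : 2 * pM s ℓ ≤ p) :
    ∃ K > 0, ∀ x y : Rd d,
      |hFn β f x - hFn β f y| ≤ K * (1 + ‖x‖ + ‖y‖) ^ ((p - 2) / 2) * ‖x - y‖ ∧
      ‖hFn β f x • x - hFn β f y • y‖ ≤ K * (1 + ‖x‖ + ‖y‖) ^ ((p - 2) / 2) * ‖x - y‖ := by
  obtain ⟨Lf, hLf, hlip⟩ := hf.lip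
  set M := Real.exp (-(β / 2) * fStar f) with hM
  have hM0 : 0 < M := Real.exp_pos _
  have hbM : ∀ x, hFn β f x ≤ M := hFn_le hβ hf
  by_cases h0 : ℓ = 0
  · have hp' : s + 1 ≤ (p - 2) / 2 := by
      rw [pM, if_pos h0] at hp; linarith
    refine ⟨M * (β / 2) * Lf + M, by positivity, fun x y => ?_⟩
    have hb1 : 1 ≤ 1 + ‖x‖ + ‖y‖ := by have := norm_nonneg x; have := norm_nonneg y; linarith
    set b := 1 + ‖x‖ + ‖y‖ with hb
    have hb0 : 0 < b := by linarith
    have hD := hFn_diff hβ x y M (hbM x) (hbM y)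
    have hD2 : |hFn β f x - hFn β f y| ≤ M * (β / 2) * Lf * b ^ s * ‖x - y‖ := by
      calc _ ≤ _ := hD
        _ ≤ M * (β / 2) * (Lf * b ^ s * ‖x - y‖) := by gcongr; exact hlip x y
        _ = _ := by ring
    have hs1 : b ^ s ≤ b ^ ((p - 2) / 2) := Real.rpow_le_rpow_of_exponent_le hb1 (by linarith)
    have hs2 : b ^ s * b ≤ b ^ ((p - 2) / 2) := by
      have : b ^ s * b = b ^ (s + 1) := by rw [Real.rpow_add hb0, Real.rpow_one]
      rw [this]; exact Real.rpow_le_rpow_of_exponent_le hb1 hp'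
    have hs3 : 1 ≤ b ^ ((p - 2) / 2) := Real.one_le_rpow hb1 (by linarith)
    constructor
    · calc _ ≤ _ := hD2
        _ ≤ (M * (β / 2) * Lf + M) * b ^ ((p - 2) / 2) * ‖x - y‖ := by
          gcongr; linarith
    · have e : hFn β f x • x - hFn β f y • y = hFn β f x • (x - y) + (hFn β f x - hFn β f y) • y := by module
      rw [e]
      refine (norm_add_le _ _).trans ?_
      rw [norm_smul, norm_smul, Real.norm_of_nonneg (hFn_pos β f x).le, Real.norm_eq_abs]
      have hyb : ‖y‖ ≤ b := by have := norm_nonneg x; linarith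
      calc hFn β f x * ‖x - y‖ + |hFn β f x - hFn β f y| * ‖y‖
          ≤ M * b ^ ((p - 2) / 2) * ‖x - y‖ + (M * (β / 2) * Lf * b ^ s * ‖x - y‖) * b := by
            gcongr
            calc _ ≤ M := hbM x
              _ ≤ M * b ^ ((p - 2) / 2) := le_mul_of_one_le_right hM0.le hs3
        _ = M * b ^ ((p - 2) / 2) * ‖x - y‖ + M * (β / 2) * Lf * (b ^ s * b) * ‖x - y‖ := by ring
        _ ≤ M * b ^ ((p - 2) / 2) * ‖x - y‖ + M * (β / 2) * Lf * b ^ ((p - 2) / 2) * ‖x - y‖ := by gcongr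
        _ = _ := by ring
  · have hℓ' : 0 < ℓ := lt_of_le_of_ne hℓ (Ne.symm h0)
    have hp' : 0 ≤ (p - 2) / 2 := by
      rw [pM, if_neg h0] at hp; linarith
    obtain ⟨cl, hcl, Cl, hCl, hlow⟩ := hf.growth_lower
    obtain ⟨D, hD0, hD⟩ := decay_bdd s ℓ (β / 2 * cl) hs hℓ' (by positivity)
    set M' := M * Real.exp (β / 2 * Cl) with hM'
    have hM'0 : 0 < M' := by positivity
    have hexp : ∀ x t, 0 ≤ t → t ≤ ‖x‖ → hFn β f x ≤ M' * Real.exp (-(β / 2 * cl * t ^ ℓ)) := by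
      intro x t ht htx
      rw [hM', hM, ← Real.exp_add, ← Real.exp_add, hFn]
      refine Real.exp_le_exp.2 ?_
      have h1 := hlow x
      have h2 : t ^ ℓ ≤ ‖x‖ ^ ℓ := Real.rpow_le_rpow ht htx hℓ
      have h3 : cl * t ^ ℓ - Cl ≤ f x - fStar f := by nlinarith
      nlinarith
    set K := M' * (β / 2) * Lf * D + M with hK
    have hK0 : 0 < K := by positivity
    -- the core estimate
    have core : ∀ x y : Rd d, ‖x‖ ≤ ‖y‖ → (1 + ‖x‖) * |hFn β f x - hFn β f y| ≤ K * ‖x - y‖ := by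
      intro x y hxy
      have hx0 := norm_nonneg x
      rcases le_total ‖y‖ (2 * ‖x‖ + 1) with h | h
      · have h1 := hFn_diff hβ x y _ (hexp x ‖x‖ hx0 le_rfl) (hexp y ‖x‖ hx0 hxy)
        have h2 : (1 + ‖x‖ + ‖y‖) ^ s ≤ (2 + 3 * ‖x‖) ^ s :=
          Real.rpow_le_rpow (by positivity) (by linarith) hs
        have h3 := hD ‖x‖ hx0
        set ee := Real.exp (-(β / 2 * cl * ‖x‖ ^ ℓ)) with hee
        have hee0 : 0 < ee := Real.exp_pos _
        calc (1 + ‖x‖) * |hFn β f x - hFn β f y|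
            ≤ (1 + ‖x‖) * (M' * ee * (β / 2) * |f x - f y|) := by gcongr
          _ ≤ (1 + ‖x‖) * (M' * ee * (β / 2) * (Lf * (2 + 3 * ‖x‖) ^ s * ‖x - y‖)) := by
              gcongr
              refine (hlip x y).trans ?_
              gcongr
          _ = M' * (β / 2) * Lf * ((1 + ‖x‖) * (2 + 3 * ‖x‖) ^ s * ee) * ‖x - y‖ := by ring
          _ ≤ M' * (β / 2) * Lf * D * ‖x - y‖ := by gcongr
          _ ≤ K * ‖x - y‖ := by rw [hK]; gcongr; linarith
      · have h1 : 1 + ‖x‖ ≤ ‖x - y‖ := by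
          have := norm_sub_norm_le y x
          rw [norm_sub_rev] at this; linarith
        have h2 : |hFn β f x - hFn β f y| ≤ M := by
          have := hbM x; have := hbM y; have := hFn_pos β f x; have := hFn_pos β f y
          rw [abs_le]; constructor <;> linarith
        have h3 : M ≤ K := by rw [hK]; have : 0 < M' * (β / 2) * Lf * D := by positivity
                              linarith
        calc (1 + ‖x‖) * |hFn β f x - hFn β f y| ≤ ‖x - y‖ * K := by gcongr; exact h2.trans h3
          _ = _ := mul_comm _ _
    have main : ∀ x y : Rd d, ‖x‖ ≤ ‖y‖ → |hFn β f x - hFn β f y| ≤ (K + M) * ‖x - y‖ ∧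
        ‖hFn β f x • x - hFn β f y • y‖ ≤ (K + M) * ‖x - y‖ := by
      intro x y hxy
      have h := core x y hxy
      have hx0 := norm_nonneg x
      have hd0 := norm_nonneg (x - y)
      have ha := abs_nonneg (hFn β f x - hFn β f y)
      have e0 : 0 ≤ M * ‖x - y‖ := by positivity
      have e1 : 0 ≤ ‖x‖ * |hFn β f x - hFn β f y| := by positivity
      constructor
      · nlinarith
      · have e : hFn β f x • x - hFn β f y • y = hFn β f y • (x - y) + (hFn β f x - hFn β f y) • x := by module
        rw [e]
        refine (norm_add_le _ _).trans ?_
        rw [norm_smul, norm_smul, Real.norm_of_nonneg (hFn_pos β f y).le, Real.norm_eq_abs]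
        have : hFn β f y * ‖x - y‖ ≤ M * ‖x - y‖ := by gcongr; exact hbM y
        nlinarith
    have main2 : ∀ x y : Rd d, |hFn β f x - hFn β f y| ≤ (K + M) * ‖x - y‖ ∧
        ‖hFn β f x • x - hFn β f y • y‖ ≤ (K + M) * ‖x - y‖ := by
      intro x y
      rcases le_total ‖x‖ ‖y‖ with h | h
      · exact main x y h
      · have := main y x h
        rwa [abs_sub_comm, norm_sub_rev y x, norm_sub_rev (_ • y)] at this
    refine ⟨K + M, by positivity, fun x y => ?_⟩
    have hb1 : 1 ≤ 1 + ‖x‖ + ‖y‖ := by have := norm_nonneg x; have := norm_nonneg y; linarith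
    have hs3 : 1 ≤ (1 + ‖x‖ + ‖y‖) ^ ((p - 2) / 2) := Real.one_le_rpow hb1 (by linarith)
    have hle : (K + M) * ‖x - y‖ ≤ (K + M) * (1 + ‖x‖ + ‖y‖) ^ ((p - 2) / 2) * ‖x - y‖ := by
      gcongr
      exact le_mul_of_one_le_right (by positivity) hs3
    exact ⟨(main2 x y).1.trans hle, (main2 x y).2.trans hle⟩

theorem f_cont {d : ℕ} {s ℓ u : ℝ} (hs : 0 ≤ s) {f : Rd d → ℝ} (hf : ClassA s ℓ u f) : Continuous f := by
  obtain ⟨Lf, hLf, hlip⟩ := hf.lip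
  rw [continuous_iff_continuousAt]
  intro x
  rw [ContinuousAt, tendsto_iff_norm_sub_tendsto_zero]
  have hc : Continuous fun y : Rd d => Lf * (1 + ‖y‖ + ‖x‖) ^ s * ‖y - x‖ := by
    have : Continuous fun y : Rd d => (1 + ‖y‖ + ‖x‖) ^ s :=
      Continuous.rpow_const (by fun_prop) (fun y => Or.inr hs)
    fun_prop
  have h2 : Filter.Tendsto (fun y : Rd d => Lf * (1 + ‖y‖ + ‖x‖) ^ s * ‖y - x‖) (nhds x) (nhds 0) := by
    have := hc.tendsto x
    simpa using this
  exact squeeze_zero (fun _ => norm_nonneg _) (fun y => hlip y x) h2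

theorem hFn_cont (β : ℝ) {d : ℕ} {s ℓ u : ℝ} (hs : 0 ≤ s) {f : Rd d → ℝ} (hf : ClassA s ℓ u f) :
    Continuous (hFn β f) := by
  have := f_cont hs hf
  unfold hFn; fun_prop

theorem nn_rpow_eq {E : Type*} [NormedAddCommGroup E] (p : ℝ) (hp : 0 ≤ p) (x : E) :
    (‖x‖₊ : ℝ≥0∞) ^ p = ENNReal.ofReal (‖x‖ ^ p) := by
  rw [← ENNReal.ofReal_rpow_of_nonneg (norm_nonneg x) hp, ofReal_norm, enorm_eq_nnnorm]

theorem mom_real {d : ℕ} {p R : ℝ} (hp : 2 ≤ p) (hR : 0 < R) {μ : Measure (Rd d)} (h : MomLE p R μ) :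
    Integrable (fun x : Rd d => ‖x‖ ^ p) μ ∧ ∫ x, ‖x‖ ^ p ∂μ ≤ R ^ p := by
  have hp0 : 0 ≤ p := by linarith
  have hc : Continuous (fun x : Rd d => ‖x‖ ^ p) :=
    Continuous.rpow_const continuous_norm (fun _ => Or.inr hp0)
  unfold MomLE at h
  simp only [nn_rpow_eq p hp0] at h
  have hnn : 0 ≤ᵐ[μ] fun x : Rd d => ‖x‖ ^ p := Filter.Eventually.of_forall fun x => by positivity
  constructor
  · refine ⟨hc.aestronglyMeasurable, ?_⟩
    rw [hasFiniteIntegral_iff_ofReal hnn]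
    exact h.trans_lt ENNReal.ofReal_lt_top
  · rw [integral_eq_lintegral_of_nonneg_ae hnn hc.aestronglyMeasurable]
    exact ENNReal.toReal_le_of_le_ofReal (by positivity) h

theorem three_pow (p : ℝ) (hp : 0 ≤ p) (a b c : ℝ≥0∞) :
    (a + b + c) ^ p ≤ 3 ^ p * (a ^ p + b ^ p + c ^ p) := by
  have h1 : a + b + c ≤ 3 * max (max a b) c := by
    have ha : a ≤ max (max a b) c := (le_max_left _ _).trans (le_max_left _ _)
    have hb : b ≤ max (max a b) c := (le_max_right _ _).trans (le_max_left _ _)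
    have hc : c ≤ max (max a b) c := le_max_right _ _
    calc a + b + c ≤ max (max a b) c + max (max a b) c + max (max a b) c := by gcongr
      _ = _ := by ring
  calc (a + b + c) ^ p ≤ (3 * max (max a b) c) ^ p := ENNReal.rpow_le_rpow h1 hp
    _ = 3 ^ p * (max (max a b) c) ^ p := ENNReal.mul_rpow_of_nonneg _ _ hp
    _ ≤ _ := by
      gcongr
      rcases max_choice (max a b) c with h | h <;> rw [h]
      · rcases max_choice a b with h | h <;> rw [h]
        · rw [add_assoc]; exact le_self_add
        · rw [add_comm (a ^ p), add_assoc]; exact le_self_add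
      · exact le_add_self

theorem coupling_mom {d : ℕ} {p R : ℝ} (hp : 2 ≤ p) {μ ν : Measure (Rd d)} [IsProbabilityMeasure μ]
    (hμ : MomLE p R μ) (hν : MomLE p R ν) (π : Measure (Rd d × Rd d))
    (h1 : π.map Prod.fst = μ) (h2 : π.map Prod.snd = ν) :
    ∫⁻ z, (1 + (‖z.1‖₊ : ℝ≥0∞) + (‖z.2‖₊ : ℝ≥0∞)) ^ p ∂π ≤
      3 ^ p * (1 + ENNReal.ofReal (R ^ p) + ENNReal.ofReal (R ^ p)) := by
  have hp0 : 0 ≤ p := by linarith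
  have hπ : π Set.univ = 1 := by
    have : μ Set.univ = 1 := measure_univ
    rw [← h1, Measure.map_apply measurable_fst MeasurableSet.univ] at this
    simpa using this
  have hm : Measurable (fun x : Rd d => (‖x‖₊ : ℝ≥0∞) ^ p) := by fun_prop
  have i1 : ∫⁻ z, (‖z.1‖₊ : ℝ≥0∞) ^ p ∂π ≤ ENNReal.ofReal (R ^ p) := by
    rw [← lintegral_map (f := fun x : Rd d => (‖x‖₊ : ℝ≥0∞) ^ p) hm measurable_fst, h1]; exact hμ
  have i2 : ∫⁻ z, (‖z.2‖₊ : ℝ≥0∞) ^ p ∂π ≤ ENNReal.ofReal (R ^ p) := by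
    rw [← lintegral_map (f := fun x : Rd d => (‖x‖₊ : ℝ≥0∞) ^ p) hm measurable_snd, h2]; exact hν
  calc _ ≤ ∫⁻ z, 3 ^ p * (1 + (‖z.1‖₊ : ℝ≥0∞) ^ p + (‖z.2‖₊ : ℝ≥0∞) ^ p) ∂π := by
        refine lintegral_mono fun z => ?_
        have := three_pow p hp0 1 (‖z.1‖₊ : ℝ≥0∞) (‖z.2‖₊ : ℝ≥0∞)
        rwa [ENNReal.one_rpow] at this
    _ = 3 ^ p * (1 + ∫⁻ z, (‖z.1‖₊ : ℝ≥0∞) ^ p ∂π + ∫⁻ z, (‖z.2‖₊ : ℝ≥0∞) ^ p ∂π) := by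
        rw [lintegral_const_mul _ (by fun_prop), lintegral_add_left (by fun_prop), lintegral_add_left (by fun_prop)]
        simp [hπ]
    _ ≤ _ := by gcongr

theorem l2diff {d : ℕ} {p K : ℝ} (hp : 2 ≤ p) (hK : 0 ≤ K) (π : Measure (Rd d × Rd d)) (φ : Rd d → ℝ)
    (hφ : ∀ x y : Rd d, |φ x - φ y| ≤ K * (1 + ‖x‖ + ‖y‖) ^ ((p - 2) / 2) * ‖x - y‖) :
    eLpNorm (fun z : Rd d × Rd d => φ z.1 - φ z.2) 2 π ≤ ENNReal.ofReal K *
      (∫⁻ z, (1 + (‖z.1‖₊ : ℝ≥0∞) + (‖z.2‖₊ : ℝ≥0∞)) ^ p ∂π) ^ ((1 - 2 / p) / 2) *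
      (∫⁻ z, (‖z.1 - z.2‖₊ : ℝ≥0∞) ^ p ∂π) ^ (1 / p) := by
  have hp0 : 0 < p := by linarith
  rw [eLpNorm_eq_lintegral_rpow_enorm_toReal (by norm_num) (by norm_num)]
  simp only [ENNReal.toReal_ofNat]
  have hpt : ∀ z : Rd d × Rd d, ‖φ z.1 - φ z.2‖ₑ ^ (2 : ℝ) ≤ ENNReal.ofReal K ^ (2 : ℝ) *
      (((1 + (‖z.1‖₊ : ℝ≥0∞) + (‖z.2‖₊ : ℝ≥0∞)) ^ p) ^ (1 - 2 / p) * ((‖z.1 - z.2‖₊ : ℝ≥0∞) ^ p) ^ (2 / p)) := by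
    intro z
    have hb : (1 + (‖z.1‖₊ : ℝ≥0∞) + (‖z.2‖₊ : ℝ≥0∞)) = ENNReal.ofReal (1 + ‖z.1‖ + ‖z.2‖) := by
      rw [ENNReal.ofReal_add (by positivity) (by positivity), ENNReal.ofReal_add (by positivity) (by positivity),
        ofReal_norm, ofReal_norm]; simp [enorm_eq_nnnorm]
    have h1 : ‖φ z.1 - φ z.2‖ₑ ≤ ENNReal.ofReal K * (1 + (‖z.1‖₊ : ℝ≥0∞) + (‖z.2‖₊ : ℝ≥0∞)) ^ ((p - 2) / 2) *
        (‖z.1 - z.2‖₊ : ℝ≥0∞) := by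
      rw [hb, ENNReal.ofReal_rpow_of_nonneg (by positivity) (by linarith), ← enorm_eq_nnnorm, ← ofReal_norm,
        ← ofReal_norm, ← ENNReal.ofReal_mul hK, ← ENNReal.ofReal_mul (by positivity)]
      exact ENNReal.ofReal_le_ofReal (hφ z.1 z.2)
    refine (ENNReal.rpow_le_rpow h1 (by norm_num)).trans (le_of_eq ?_)
    rw [ENNReal.mul_rpow_of_nonneg _ _ (by norm_num), ENNReal.mul_rpow_of_nonneg _ _ (by norm_num), mul_assoc,
      ← ENNReal.rpow_mul, ← ENNReal.rpow_mul, ← ENNReal.rpow_mul]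
    congr 3
    · field_simp
    · field_simp
  calc (∫⁻ z, ‖φ z.1 - φ z.2‖ₑ ^ (2 : ℝ) ∂π) ^ (1 / (2 : ℝ))
      ≤ (ENNReal.ofReal K ^ (2 : ℝ) * ((∫⁻ z, (1 + (‖z.1‖₊ : ℝ≥0∞) + (‖z.2‖₊ : ℝ≥0∞)) ^ p ∂π) ^ (1 - 2 / p) *
          (∫⁻ z, (‖z.1 - z.2‖₊ : ℝ≥0∞) ^ p ∂π) ^ (2 / p))) ^ (1 / (2 : ℝ)) := by
        refine ENNReal.rpow_le_rpow ?_ (by norm_num)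
        refine (lintegral_mono hpt).trans ?_
        rw [lintegral_const_mul _ (by fun_prop)]
        gcongr
        refine ENNReal.lintegral_mul_norm_pow_le (by fun_prop) (by fun_prop) ?_ (by positivity) (by ring)
        rw [sub_nonneg, div_le_one hp0]; exact hp
    _ = _ := by
        rw [ENNReal.mul_rpow_of_nonneg _ _ (by norm_num), ENNReal.mul_rpow_of_nonneg _ _ (by norm_num), mul_assoc,
          ← ENNReal.rpow_mul, ← ENNReal.rpow_mul, ← ENNReal.rpow_mul]
        congr 2
        · norm_num
        · congr 1; ring
        · congr 1; field_simp

theorem inner_toLp {Ω : Type*} [MeasurableSpace Ω] {π : Measure Ω} {f g : Ω → ℝ} (hf : MemLp f 2 π) (hg : MemLp g 2 π) :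
    inner ℝ (hf.toLp f) (hg.toLp g) = ∫ z, f z * g z ∂π := by
  rw [L2.inner_def]
  refine integral_congr_ae ?_
  filter_upwards [hf.coeFn_toLp, hg.coeFn_toLp] with z h1 h2
  rw [h1, h2]; simp [mul_comm]

theorem w_lower (β : ℝ) (hβ : 0 < β) (d : ℕ) (s ℓ u : ℝ) (hs : 0 ≤ s) (hu : 0 ≤ u)
    (f : Rd d → ℝ) (hf : ClassA s ℓ u f) (R : ℝ) (hR : 0 < R) (p : ℝ) (hp : 2 ≤ p) :
    ∃ c > 0, ∀ μ : Measure (Rd d), IsProbabilityMeasure μ → MomLE p R μ →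
      Integrable (wFn β f) μ ∧ c ^ 2 ≤ ∫ x, wFn β f x ∂μ := by
  obtain ⟨cu, hcu, Cu, hCu, hup⟩ := hf.growth_upper
  set m := Real.exp (-β * (fStar f + cu * (2 * R) ^ u + Cu)) with hm
  have hm0 : 0 < m := Real.exp_pos _
  refine ⟨Real.sqrt (m / 2), by positivity, fun μ hμ hmom => ?_⟩
  obtain ⟨hi, hb⟩ := mom_real hp hR hmom
  have hwi : Integrable (wFn β f) μ := by
    have : wFn β f = fun x => hFn β f x * hFn β f x := funext fun x => wFn_eq β f x
    rw [this]
    have hc := hFn_cont β hs hf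
    refine Integrable.of_bound (by fun_prop) (Real.exp (-(β / 2) * fStar f) * Real.exp (-(β / 2) * fStar f)) ?_
    refine Filter.Eventually.of_forall fun x => ?_
    have h1 := hFn_le hβ hf x
    have h2 := hFn_pos β f x
    rw [norm_mul, Real.norm_of_nonneg h2.le]
    gcongr
  refine ⟨hwi, ?_⟩
  rw [Real.sq_sqrt (by positivity)]
  have hp0 : 0 < p := by linarith
  have key : ∀ x : Rd d, m * (1 - ‖x‖ ^ p * ((2 * R) ^ p)⁻¹) ≤ wFn β f x := by
    intro x
    have hw : 0 < wFn β f x := Real.exp_pos _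
    rcases le_total ‖x‖ (2 * R) with h | h
    · have h1 : m ≤ wFn β f x := by
        refine Real.exp_le_exp.2 ?_
        have := hup x
        have h2 : ‖x‖ ^ u ≤ (2 * R) ^ u := Real.rpow_le_rpow (norm_nonneg _) h hu
        have h3 : cu * ‖x‖ ^ u ≤ cu * (2 * R) ^ u := by gcongr
        have h4 : f x ≤ fStar f + cu * (2 * R) ^ u + Cu := by linarith
        nlinarith
      have h2 : 0 ≤ ‖x‖ ^ p * ((2 * R) ^ p)⁻¹ := by positivity
      nlinarith
    · have h1 : (2 * R) ^ p ≤ ‖x‖ ^ p := Real.rpow_le_rpow (by positivity) h hp0.le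
      have h2 : 1 ≤ ‖x‖ ^ p * ((2 * R) ^ p)⁻¹ := by
        rw [← div_eq_mul_inv, one_le_div (by positivity)]; exact h1
      nlinarith
  have h1 : ∫ x, m * (1 - ‖x‖ ^ p * ((2 * R) ^ p)⁻¹) ∂μ ≤ ∫ x, wFn β f x ∂μ :=
    integral_mono (((integrable_const _).sub (hi.mul_const _)).const_mul _) hwi key
  rw [integral_const_mul, integral_sub (integrable_const _) (hi.mul_const _), integral_mul_const] at h1
  simp only [integral_const, probReal_univ, smul_eq_mul, mul_one] at h1
  have h2 : (∫ x, ‖x‖ ^ p ∂μ) * ((2 * R) ^ p)⁻¹ ≤ 1 / 2 := by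
    rw [← div_eq_mul_inv, div_le_iff₀ (by positivity), Real.mul_rpow (by norm_num) hR.le]
    have h3 : (2 : ℝ) ≤ 2 ^ p := by
      calc (2 : ℝ) = 2 ^ (1 : ℝ) := by simp
        _ ≤ _ := Real.rpow_le_rpow_of_exponent_le (by norm_num) (by linarith)
    have : 0 < R ^ p := by positivity
    nlinarith
  nlinarith

theorem side (β : ℝ) (hβ : 0 < β) (d : ℕ) (s ℓ u : ℝ) (hs : 0 ≤ s)
    (f : Rd d → ℝ) (hf : ClassA s ℓ u f) (R : ℝ) (hR : 0 < R) (p : ℝ) (hp : 2 ≤ p)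
    {Ω : Type*} [MeasurableSpace Ω] (π : Measure Ω) (T : Ω → Rd d) (hT : Measurable T)
    (μ : Measure (Rd d)) [IsProbabilityMeasure μ] (hmap : π.map T = μ) (hmom : MomLE p R μ) (c : ℝ) (hc0 : 0 < c)
    (hc : c ^ 2 ≤ ∫ x, wFn β f x ∂μ) :
    ∃ (hH : MemLp (fun z => hFn β f (T z)) 2 π) (hG : ∀ i, MemLp (fun z => hFn β f (T z) * T z i) 2 π),
      c ≤ ‖hH.toLp _‖ ∧ (∀ i, ‖(hG i).toLp _‖ ≤ Real.exp (-(β / 2) * fStar f) * Real.sqrt (1 + R ^ p)) ∧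
      ∀ i j, wCov β f μ i j = inner ℝ
        (‖hH.toLp _‖⁻¹ • ((hG i).toLp _ - (inner ℝ (hH.toLp _) ((hG i).toLp _) * (‖hH.toLp _‖⁻¹) ^ 2) • hH.toLp _))
        (‖hH.toLp _‖⁻¹ • ((hG j).toLp _ - (inner ℝ (hH.toLp _) ((hG j).toLp _) * (‖hH.toLp _‖⁻¹) ^ 2) • hH.toLp _)) := by
  set M := Real.exp (-(β / 2) * fStar f) with hM
  have hM0 : 0 < M := Real.exp_pos _
  have hcont := hFn_cont β hs hf
  have hp0 : 0 < p := by linarith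
  obtain ⟨hi, hb⟩ := mom_real hp hR hmom
  have hHμ : MemLp (hFn β f) 2 μ := by
    refine MemLp.of_bound (by fun_prop) M (Filter.Eventually.of_forall fun x => ?_)
    rw [Real.norm_of_nonneg (hFn_pos β f x).le]; exact hFn_le hβ hf x
  have hsq : ∀ i (x : Rd d), (hFn β f x * x i) ^ 2 ≤ M ^ 2 * (1 + ‖x‖ ^ p) := by
    intro i x
    rw [mul_pow]
    have h1 : (x i) ^ 2 ≤ ‖x‖ ^ 2 := by
      have := PiLp.norm_apply_le x i
      rw [Real.norm_eq_abs] at this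
      rw [← sq_abs]; gcongr
    have h2 : ‖x‖ ^ 2 ≤ 1 + ‖x‖ ^ p := by
      rcases le_total ‖x‖ 1 with h | h
      · have : ‖x‖ ^ 2 ≤ 1 := pow_le_one₀ (norm_nonneg _) h
        have : 0 ≤ ‖x‖ ^ p := by positivity
        linarith
      · have : ‖x‖ ^ (2 : ℝ) ≤ ‖x‖ ^ p := Real.rpow_le_rpow_of_exponent_le h hp
        rw [Real.rpow_two] at this
        linarith
    have h3 := hFn_le hβ hf x
    have h4 := (hFn_pos β f x).le
    gcongr
    exact h1.trans h2
  have hdom : Integrable (fun x : Rd d => M ^ 2 * (1 + ‖x‖ ^ p)) μ :=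
    ((integrable_const _).add hi).const_mul _
  have hsm : ∀ i, AEStronglyMeasurable (fun x : Rd d => hFn β f x * x i) μ := fun i => by fun_prop
  have hGμ : ∀ i, MemLp (fun x : Rd d => hFn β f x * x i) 2 μ := by
    intro i
    rw [memLp_two_iff_integrable_sq (hsm i)]
    refine hdom.mono' ((hsm i).pow 2) (Filter.Eventually.of_forall fun x => ?_)
    rw [Real.norm_of_nonneg (sq_nonneg _)]; exact hsq i x
  have hint : ∀ ψ : Rd d → ℝ, Continuous ψ → ∫ z, ψ (T z) ∂π = ∫ x, ψ x ∂μ := by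
    intro ψ hψ
    rw [← hmap, integral_map hT.aemeasurable hψ.aestronglyMeasurable]
  have hH : MemLp (fun z => hFn β f (T z)) 2 π := by
    rw [← hmap] at hHμ; exact hHμ.comp_of_map hT.aemeasurable
  have hG : ∀ i, MemLp (fun z => hFn β f (T z) * T z i) 2 π := by
    intro i
    have := hGμ i
    rw [← hmap] at this; exact this.comp_of_map hT.aemeasurable
  set Z := ∫ x, wFn β f x ∂μ with hZ
  have nH : ‖hH.toLp _‖ ^ 2 = Z := by
    rw [← real_inner_self_eq_norm_sq, inner_toLp, hint (fun x => hFn β f x * hFn β f x) (by fun_prop), hZ]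
    simp only [wFn_eq]
  have nG : ∀ i, ‖(hG i).toLp _‖ ^ 2 ≤ (M * Real.sqrt (1 + R ^ p)) ^ 2 := by
    intro i
    rw [← real_inner_self_eq_norm_sq, inner_toLp, hint (fun x => hFn β f x * x i * (hFn β f x * x i)) (by fun_prop)]
    rw [mul_pow, Real.sq_sqrt (by positivity)]
    calc ∫ x, hFn β f x * x i * (hFn β f x * x i) ∂μ ≤ ∫ x, M ^ 2 * (1 + ‖x‖ ^ p) ∂μ := by
          refine integral_mono ?_ hdom fun x => ?_
          · have := (memLp_two_iff_integrable_sq (hsm i)).1 (hGμ i)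
            simpa only [sq] using this
          · have := hsq i x
            rwa [sq] at this
      _ = M ^ 2 * (1 + ∫ x, ‖x‖ ^ p ∂μ) := by
          rw [integral_const_mul, integral_add (integrable_const _) hi]; simp
      _ ≤ _ := by gcongr
  have hwx : Integrable (fun x : Rd d => wFn β f x • x) μ := by
    have hcw : Continuous (wFn β f) := by
      have : wFn β f = fun x => hFn β f x * hFn β f x := funext fun x => wFn_eq β f x
      rw [this]; fun_prop
    refine Integrable.mono' (g := fun x : Rd d => M ^ 2 * (1 + ‖x‖ ^ p)) hdom (by fun_prop)
      (Filter.Eventually.of_forall fun x => ?_)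
    have h1 : ‖x‖ ≤ 1 + ‖x‖ ^ p := by
      rcases le_total ‖x‖ 1 with h | h
      · have : 0 ≤ ‖x‖ ^ p := by positivity
        linarith
      · have : ‖x‖ ^ (1 : ℝ) ≤ ‖x‖ ^ p := Real.rpow_le_rpow_of_exponent_le h (by linarith)
        rw [Real.rpow_one] at this
        linarith
    have h3 := hFn_le hβ hf x
    have h4 := (hFn_pos β f x).le
    rw [norm_smul, wFn_eq, norm_mul, Real.norm_of_nonneg h4, ← sq]
    gcongr
  have hmean : ∀ i, inner ℝ (hH.toLp _) ((hG i).toLp _) * (‖hH.toLp _‖⁻¹) ^ 2 = wMean β f μ i := by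
    intro i
    rw [inv_pow, nH, inner_toLp, hint (fun x => hFn β f x * (hFn β f x * x i)) (by fun_prop)]
    have : (∫ x, wFn β f x • x ∂μ) i = ∫ x, wFn β f x * x i ∂μ := by
      have := (EuclideanSpace.proj (𝕜 := ℝ) i).integral_comp_comm hwx
      simpa using this.symm
    rw [wMean, PiLp.smul_apply, this, smul_eq_mul, mul_comm, ← hZ]
    congr 1
    refine integral_congr_ae (Filter.Eventually.of_forall fun x => ?_)
    simp only [wFn_eq]; ring
  refine ⟨hH, hG, ?_, ?_, ?_⟩
  · rw [← nH] at hc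
    exact (pow_le_pow_iff_left₀ hc0.le (norm_nonneg _) two_ne_zero).1 hc
  · intro i
    exact (pow_le_pow_iff_left₀ (norm_nonneg _) (by positivity) two_ne_zero).1 (nG i)
  · intro i j
    rw [hmean i, hmean j, inner_smul_left, inner_smul_right, ← mul_assoc]
    have e : ∀ i, (hG i).toLp _ - wMean β f μ i • hH.toLp _ =
        ((hG i).sub (hH.const_smul (wMean β f μ i))).toLp _ := by
      intro i
      rw [MemLp.toLp_sub (hG i) (hH.const_smul _), MemLp.toLp_const_smul _ hH]
    rw [e i, e j, inner_toLp]
    simp only [Pi.sub_apply, Pi.smul_apply, smul_eq_mul]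
    rw [hint (fun x => (hFn β f x * x i - wMean β f μ i * hFn β f x) *
      (hFn β f x * x j - wMean β f μ j * hFn β f x)) (by fun_prop)]
    rw [wCov, ← hZ]
    congr 1
    · rw [← nH]; simp; ring
    · refine integral_congr_ae (Filter.Eventually.of_forall fun x => ?_)
      simp only [wFn_eq]; ring

theorem toLp_diff {d : ℕ} {p K B : ℝ} (hp : 2 ≤ p) (hK : 0 ≤ K) (π : Measure (Rd d × Rd d)) (φ : Rd d → ℝ)
    (hφ : ∀ x y : Rd d, |φ x - φ y| ≤ K * (1 + ‖x‖ + ‖y‖) ^ ((p - 2) / 2) * ‖x - y‖)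
    (hB0 : 0 ≤ B)
    (hB : ∫⁻ z, (1 + (‖z.1‖₊ : ℝ≥0∞) + (‖z.2‖₊ : ℝ≥0∞)) ^ p ∂π ≤ ENNReal.ofReal B)
    (hfin : (∫⁻ z, (‖z.1 - z.2‖₊ : ℝ≥0∞) ^ p ∂π) ^ (1 / p) ≠ ⊤)
    (h1 : MemLp (fun z : Rd d × Rd d => φ z.1) 2 π) (h2 : MemLp (fun z : Rd d × Rd d => φ z.2) 2 π) :
    ‖h1.toLp _ - h2.toLp _‖ ≤ K * B ^ ((1 - 2 / p) / 2) *
      ((∫⁻ z, (‖z.1 - z.2‖₊ : ℝ≥0∞) ^ p ∂π) ^ (1 / p)).toReal := by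
  rw [← MemLp.toLp_sub h1 h2, Lp.norm_toLp]
  have he : 0 ≤ (1 - 2 / p) / 2 := by
    have : 2 / p ≤ 1 := (div_le_one (by linarith)).2 hp
    linarith
  have h := l2diff hp hK π φ hφ
  have h' : eLpNorm (fun z : Rd d × Rd d => φ z.1 - φ z.2) 2 π ≤ ENNReal.ofReal (K * B ^ ((1 - 2 / p) / 2)) *
      (∫⁻ z, (‖z.1 - z.2‖₊ : ℝ≥0∞) ^ p ∂π) ^ (1 / p) := by
    refine h.trans ?_
    rw [ENNReal.ofReal_mul hK, ← ENNReal.ofReal_rpow_of_nonneg hB0 he]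
    gcongr
  have h3 := ENNReal.toReal_mono (ENNReal.mul_ne_top ENNReal.ofReal_ne_top hfin) h'
  rw [ENNReal.toReal_mul, ENNReal.toReal_ofReal (by positivity)] at h3
  exact h3

/-- **Basic Wasserstein stability estimate for the square root of the weighted covariance.**
If `f ∈ A(s, ℓ, u)`, then for every `R > 0` and `p ≥ 2 p_M(s, ℓ)` there is `L > 0`
such that `‖√C_β(μ) - √C_β(ν)‖_F ≤ L ⬝ W_p(μ, ν)` for all `μ, ν ∈ P_{p,R}(ℝ^d)`. -/
theorem sqrt_weighted_cov_stability
    (β : ℝ) (hβ : 0 < β) (d : ℕ) (hd : 1 ≤ d)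
    (s ℓ u : ℝ) (hs : 0 ≤ s) (hℓ : 0 ≤ ℓ) (hℓu : ℓ ≤ u)
    (f : Rd d → ℝ) (hf : ClassA s ℓ u f)
    (R : ℝ) (hR : 0 < R) (p : ℝ) (hp : 2 * pM s ℓ ≤ p) :
    ∃ L > 0, ∀ μ ν : Measure (Rd d),
      IsProbabilityMeasure μ → IsProbabilityMeasure ν →
      MomLE p R μ → MomLE p R ν →
      ∀ Sμ Sν : Matrix (Fin d) (Fin d) ℝ,
        IsPSDSqrt Sμ (wCov β f μ) → IsPSDSqrt Sν (wCov β f ν) →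
        frobNorm (Sμ - Sν) ≤ L * Wp p μ ν := by
  have hp2 : 2 ≤ p := by
    unfold pM at hp
    split_ifs at hp <;> linarith
  have hp0 : 0 < p := by linarith
  obtain ⟨K, hK, hpt⟩ := ptwise β hβ d s ℓ u hs hℓ f hf p hp
  obtain ⟨c, hc, hlow⟩ := w_lower β hβ d s ℓ u hs (hℓ.trans hℓu) f hf R hR p hp2
  set BG := Real.exp (-(β / 2) * fStar f) * Real.sqrt (1 + R ^ p) with hBG
  have hBG0 : 0 < BG := by positivity
  set B := 3 ^ p * (1 + R ^ p + R ^ p) with hB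
  have hB0 : 0 < B := by positivity
  have hBE : (3 : ℝ≥0∞) ^ p * (1 + ENNReal.ofReal (R ^ p) + ENNReal.ofReal (R ^ p)) = ENNReal.ofReal B := by
    rw [hB, ENNReal.ofReal_mul (by positivity), ENNReal.ofReal_add (by positivity) (by positivity),
      ENNReal.ofReal_add (by positivity) (by positivity), ← ENNReal.ofReal_rpow_of_nonneg (by norm_num : (0 : ℝ) ≤ 3) hp0.le]
    simp
  set Q := K * B ^ ((1 - 2 / p) / 2) with hQ
  have hQ0 : 0 < Q := by positivity
  set Kh := 2 / c + (4 * BG / c + 2 * BG / c) / c with hKh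
  have hKh0 : 0 < Kh := by positivity
  have hd0 : (0 : ℝ) < d := by exact_mod_cast hd
  set L := Real.sqrt (2 * d) * (Kh * (2 * Q)) with hL
  have hL0 : 0 < L := by positivity
  refine ⟨L, hL0, ?_⟩
  intro μ ν hμ hν mμ mν Sμ Sν hSμ hSν
  -- estimate for every coupling
  have coup : ∀ π : Measure (Rd d × Rd d), π.map Prod.fst = μ → π.map Prod.snd = ν →
      (∫⁻ z, (‖z.1 - z.2‖₊ : ℝ≥0∞) ^ p ∂π) ^ (1 / p) ≠ ⊤ →
      frobNorm (Sμ - Sν) ≤ L * ((∫⁻ z, (‖z.1 - z.2‖₊ : ℝ≥0∞) ^ p ∂π) ^ (1 / p)).toReal := by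
    intro π h1 h2 hfin
    have hmB := (coupling_mom hp2 mμ mν π h1 h2).trans (le_of_eq hBE)
    obtain ⟨hH1, hG1, cH1, bG1, cov1⟩ := side β hβ d s ℓ u hs f hf R hR p hp2 π Prod.fst measurable_fst μ h1 mμ c hc
      (hlow μ hμ mμ).2
    obtain ⟨hH2, hG2, cH2, bG2, cov2⟩ := side β hβ d s ℓ u hs f hf R hR p hp2 π Prod.snd measurable_snd ν h2 mν c hc
      (hlow ν hν mν).2
    set cost := ((∫⁻ z, (‖z.1 - z.2‖₊ : ℝ≥0∞) ^ p ∂π) ^ (1 / p)).toReal with hcost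
    have hcost0 : 0 ≤ cost := ENNReal.toReal_nonneg
    have dH : ‖hH1.toLp _ - hH2.toLp _‖ ≤ Q * cost :=
      toLp_diff hp2 hK.le π (hFn β f) (fun x y => (hpt x y).1) hB0.le hmB hfin hH1 hH2
    have dG : ∀ i, ‖(hG1 i).toLp _ - (hG2 i).toLp _‖ ≤ Q * cost := by
      intro i
      refine toLp_diff hp2 hK.le π (fun x => hFn β f x * x i) (fun x y => ?_) hB0.le hmB hfin (hG1 i) (hG2 i)
      refine le_trans ?_ (hpt x y).2
      have := PiLp.norm_apply_le (hFn β f x • x - hFn β f y • y) i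
      simpa using this
    have hg := gram_sqrt _ _ Sμ Sν hSμ.1 hSν.1 (fun i j => by rw [hSμ.2]; exact cov1 i j)
      (fun i j => by rw [hSν.2]; exact cov2 i j)
    have hF := fun i => hilb c BG hc hBG0 _ _ _ _ cH1 cH2 (bG1 i) (bG2 i)
    rw [frobNorm, Real.sqrt_le_left (by positivity)]
    refine hg.trans ?_
    have hF2 : ∀ i ∈ (Finset.univ : Finset (Fin d)), _ ≤ (Kh * (2 * Q) * cost) ^ 2 := fun i _ =>
      pow_le_pow_left₀ (norm_nonneg _) ((hF i).trans (show _ ≤ Kh * (2 * Q) * cost by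
        rw [mul_assoc Kh]
        refine mul_le_mul_of_nonneg_left ?_ hKh0.le
        have := dG i
        linarith)) 2
    have hsum := Finset.sum_le_card_nsmul _ _ _ hF2
    rw [Finset.card_univ, Fintype.card_fin, nsmul_eq_mul] at hsum
    have e : (L * cost) ^ 2 = 2 * (d * (Kh * (2 * Q) * cost) ^ 2) := by
      rw [hL, mul_assoc, mul_pow, Real.sq_sqrt (by positivity)]; ring
    rw [e]
    linarith
  -- pass to the infimum
  set A : Set ℝ≥0∞ := {c : ℝ≥0∞ | ∃ π : Measure (Rd d × Rd d),
      π.map Prod.fst = μ ∧ π.map Prod.snd = ν ∧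
      c = (∫⁻ z, (‖z.1 - z.2‖₊ : ℝ≥0∞) ^ p ∂π) ^ (1 / p)} with hA
  have hlow2 : ENNReal.ofReal (frobNorm (Sμ - Sν) / L) ≤ sInf A := by
    refine le_sInf ?_
    rintro a ⟨π, h1, h2, rfl⟩
    by_cases hfin : (∫⁻ z, (‖z.1 - z.2‖₊ : ℝ≥0∞) ^ p ∂π) ^ (1 / p) = ⊤
    · rw [hfin]; exact le_top
    · refine ENNReal.ofReal_le_of_le_toReal ?_
      rw [div_le_iff₀' hL0]
      exact coup π h1 h2 hfin
  have hfinA : sInf A ≠ ⊤ := by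
    have h1 : (μ.prod ν).map Prod.fst = μ := by simp [Measure.map_fst_prod]
    have h2 : (μ.prod ν).map Prod.snd = ν := by simp [Measure.map_snd_prod]
    refine ne_top_of_le_ne_top ?_ (sInf_le ⟨μ.prod ν, h1, h2, rfl⟩)
    refine ENNReal.rpow_ne_top_of_nonneg (by positivity) ?_
    refine ne_top_of_le_ne_top (b := ENNReal.ofReal B) ENNReal.ofReal_ne_top ?_
    refine le_trans ?_ ((coupling_mom hp2 mμ mν _ h1 h2).trans (le_of_eq hBE))
    refine lintegral_mono fun z => ENNReal.rpow_le_rpow ?_ hp0.le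
    have : ‖z.1 - z.2‖₊ ≤ ‖z.1‖₊ + ‖z.2‖₊ := nnnorm_sub_le _ _
    calc (‖z.1 - z.2‖₊ : ℝ≥0∞) ≤ (‖z.1‖₊ : ℝ≥0∞) + (‖z.2‖₊ : ℝ≥0∞) := by exact_mod_cast this
      _ ≤ _ := by rw [add_assoc]; exact le_add_self
  have := ENNReal.toReal_mono hfinA hlow2
  rw [ENNReal.toReal_ofReal (by unfold frobNorm; positivity), div_le_iff₀' hL0] at this
  exact this

end
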